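/- (Almost sure convergence of linear TD with i.i.d. samples.) Let {S_t} determine an irreducible aperiodic finite Markov chain with transition matrix P_π and stationary distribution d_π. Consider linear TD driven by i.i.d. samples: at each step t, draw (S_{t,0}, S_{t,1}) independently with S_{t,0} ~ d_π and S_{t,1} ~ P_π(S_{t,0}, ·), and update w_{t+1} = w_t + α_t·(r_π(S_{t,0}) + γ·⟨x(S_{t,1}), w_t⟩ − ⟨x(S_{t,0}), w_t⟩)·x(S_{t,0}), where X has full column rank, γ ∈ [0,1), and {α_t} satisfies the Robbins–Monro condition. Then w_t → w* := −A⁻¹b almost surely, where A = Xᵀ D_π (γP_π − I) X and b = Xᵀ D_π r_π. -/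

import Mathlib

/-!
Write `v t = w t - w*` and `V t = |v t|²`. The proof is a Robbins–Siegmund argument for `V`.

* The TD matrix `A` is negative definite (`exists_tdMatrix_negDef`): with `u = X v`,
  `⟨v, A v⟩ = ∑ d(s) u(s) (γ (P u)(s) - u(s)) ≤ -(1 - γ) ∑ d(s) u(s)²`, because stationarity makes
  `P` nonexpansive in `L²(d)`; irreducibility makes `d` strictly positive, and `X` has a left
  inverse, so the right-hand side is at most `-c |v|²`. In particular `A` is invertible and
  `b + A w* = 0`.
* The sample `ω t` has law `p(s, s') = d(s) P(s, s')` and is independent of the past, so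
  conditional expectations given the past are averages over `p` (`condExp_past_eq_sum`). Hence
  `E[V (t+1) | past] ≤ (1 + C α²) V t + C α² - 2 c α V t`, with `α = α t`.
* Dividing by `Q t = ∏_{k<t} (1 + C α k²)`, which stays between `1` and a constant, and
  compensating the remaining two terms, gives a supermartingale bounded below
  (`ae_tendsto_zero_of_drift`). It converges almost surely, and along each convergent path
  `∑ α k V k < ∞` while `V t / Q t` has a limit; as `∑ α k = ∞`, that limit is `0`
  (`tendsto_zero_of_almost_supermartingale_path`).
-/

open Finset Matrix MeasureTheory Filter

/-- The set of return times of state `i` under the stochastic matrix `P`. -/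
def returnTimes {S : Type*} [Fintype S] [DecidableEq S] (P : Matrix S S ℝ) (i : S) : Set ℕ :=
  {n | 1 ≤ n ∧ 0 < (P ^ n) i i}

/-! ### Pathwise part of the Robbins–Siegmund argument -/

/-- If the compensated process `V / Q + ∑ 2 c α V / Q - ∑ C α² / Q` converges along a path, then so
does `V / Q`, and divergence of `∑ α` forces its limit to be zero. -/
lemma tendsto_zero_of_almost_supermartingale_path
    (α V Q : ℕ → ℝ) (C c M z : ℝ) (hα : ∀ t, 0 < α t) (hC : 0 ≤ C) (hc : 0 < c)
    (hαsum : Tendsto (fun n => ∑ k ∈ Finset.range n, α k) atTop atTop)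
    (hαsq : Summable (fun t => (α t) ^ 2))
    (hV : ∀ t, 0 ≤ V t) (hQ1 : ∀ t, 1 ≤ Q t) (hQM : ∀ t, Q t ≤ M)
    (hz : Tendsto (fun t => V t / Q t + ∑ k ∈ Finset.range t, 2 * c * α k * V k / Q (k + 1)
      - ∑ k ∈ Finset.range t, C * (α k) ^ 2 / Q (k + 1)) atTop (nhds z)) :
    Tendsto V atTop (nhds 0) := by
  have hQ0 : ∀ t, 0 < Q t := fun t => lt_of_lt_of_le one_pos (hQ1 t)
  have hM : 0 < M := (hQ0 0).trans_le (hQM 0)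
  have hs1 : Summable (fun k => C * (α k) ^ 2 / Q (k + 1)) := by
    refine Summable.of_nonneg_of_le (fun k => ?_) (fun k => ?_) (hαsq.mul_left C)
    · have := hQ0 (k + 1); positivity
    · exact div_le_self (by positivity) (hQ1 _)
  have h2 := hz.add hs1.hasSum.tendsto_sum_nat
  simp only [sub_add_cancel] at h2
  -- the nonnegative drift series is bounded by the convergent total, hence summable
  have hterm : ∀ k, 0 ≤ 2 * c * α k * V k / Q (k + 1) := fun k => by
    have := hQ0 (k + 1); have := hα k; have := hV k; positivity
  obtain ⟨B, hB⟩ := h2.bddAbove_range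
  have hs2 : Summable (fun k => 2 * c * α k * V k / Q (k + 1)) := by
    refine summable_of_sum_range_le hterm (c := B) (fun n => ?_)
    have h3 := hB ⟨n, rfl⟩
    have h4 : 0 ≤ V n / Q n := div_nonneg (hV n) (hQ0 n).le
    simp only at h3
    linarith
  have h3 := h2.sub hs2.hasSum.tendsto_sum_nat
  simp only [add_sub_cancel_right] at h3
  generalize (z + ∑' k, C * (α k) ^ 2 / Q (k + 1)) - ∑' k, 2 * c * α k * V k / Q (k + 1) = l at h3
  have hl0 : 0 ≤ l := ge_of_tendsto' h3 (fun t => div_nonneg (hV t) (hQ0 t).le)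
  have hl : l = 0 := by
    by_contra hne
    have hlpos : 0 < l := lt_of_le_of_ne hl0 (Ne.symm hne)
    -- a positive limit would make the drift series dominate a multiple of the divergent `∑ α`
    have hev : ∀ᶠ k in atTop, α k ≤ (M / (c * l)) * (2 * c * α k * V k / Q (k + 1)) := by
      filter_upwards [h3.eventually (lt_mem_nhds (half_lt_self hlpos))] with k hk
      have hVk : l / 2 ≤ V k := hk.le.trans (div_le_self (hV k) (hQ1 k))
      have h5 : c * α k * l / M ≤ 2 * c * α k * V k / Q (k + 1) := by
        have := hα k
        apply div_le_div₀ _ _ (hQ0 _) (hQM _)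
        · have := hV k; positivity
        · nlinarith [mul_le_mul_of_nonneg_left hVk (mul_pos hc this).le]
      calc α k = (M / (c * l)) * (c * α k * l / M) := by field_simp
        _ ≤ _ := mul_le_mul_of_nonneg_left h5 (by positivity)
    have hsα : Summable α := by
      refine Summable.of_norm_bounded_eventually_nat (hs2.mul_left (M / (c * l))) ?_
      filter_upwards [hev] with k hk
      rwa [Real.norm_eq_abs, abs_of_pos (hα k)]
    exact not_tendsto_nhds_of_tendsto_atTop hαsum _ hsα.hasSum.tendsto_sum_nat
  rw [hl] at h3
  refine squeeze_zero hV (fun t => ?_) (by simpa using h3.const_mul M)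
  calc V t = Q t * (V t / Q t) := by have := (hQ0 t).ne'; field_simp
    _ ≤ M * (V t / Q t) := mul_le_mul_of_nonneg_right (hQM t) (div_nonneg (hV t) (hQ0 t).le)

/-! ### Conditioning on the past of an i.i.d. sequence -/

/-- The σ-algebra at time `t` is generated by the coordinates `ω 0, …, ω (t - 1)`, so the sample
`ω t` used in step `t` is still unknown at time `t`. -/
def pastFiltration (E : Type*) [MeasurableSpace E] :
    Filtration ℕ (inferInstance : MeasurableSpace (ℕ → E)) where
  seq t := MeasurableSpace.comap (Set.Iio t).domRestrict inferInstance
  mono' := by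
    intro s t hst
    rw [← measurable_iff_comap_le]
    refine @measurable_pi_lambda _ _ _ (_) _ _ fun i => ?_
    have hi : (i : ℕ) ∈ Set.Iio t := lt_of_lt_of_le i.2 hst
    exact (measurable_pi_apply (X := fun _ : Set.Iio t => E) ⟨i, hi⟩).comp (comap_measurable _)
  le' t := by
    rw [← measurable_iff_comap_le]
    exact measurable_pi_lambda _ (fun i => measurable_pi_apply _)

section Past

variable {E : Type*} [Finite E] [MeasurableSpace E] [MeasurableSingletonClass E]

lemma DependsOn.stronglyMeasurable_past {f : (ℕ → E) → ℝ} {t : ℕ}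
    (hf : DependsOn f (Set.Iio t)) : StronglyMeasurable[pastFiltration E t] f := by
  obtain ⟨g, rfl⟩ := dependsOn_iff_exists_comp.1 hf
  exact ((measurable_of_finite g).comp (comap_measurable _)).stronglyMeasurable

/-- With finitely many samples, a function of finitely many coordinates takes finitely many
values, so it is integrable. -/
lemma DependsOn.integrable_of_finite {f : (ℕ → E) → ℝ} {t : ℕ} (μ : Measure (ℕ → E))
    [IsFiniteMeasure μ] (hf : DependsOn f (Set.Iio t)) : Integrable f μ := by
  have hm := (hf.stronglyMeasurable_past.mono ((pastFiltration E).le t)).aestronglyMeasurable (μ := μ)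
  obtain ⟨g, rfl⟩ := dependsOn_iff_exists_comp.1 hf
  obtain ⟨B, hB⟩ := (Set.finite_range (fun z => ‖g z‖)).bddAbove
  exact Integrable.of_bound hm B (ae_of_all _ fun ω => hB ⟨_, rfl⟩)

variable {μ : Measure (ℕ → E)} {p : E → ℝ}

/-- Under the cylinder formula, `ω t` has law `p` and is independent of the past. -/
lemma measure_inter_coord (hp : ∀ y, 0 ≤ p y)
    (hμ : ∀ (t : ℕ) (ys : ℕ → E), μ {ω | ∀ i < t, ω i = ys i} =
      ENNReal.ofReal (∏ i ∈ Finset.range t, p (ys i)))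
    (t : ℕ) (y : E) {s : Set (ℕ → E)} (hs : MeasurableSet[pastFiltration E t] s) :
    μ (s ∩ {ω | ω t = y}) = μ s * ENNReal.ofReal (p y) := by
  classical
  have := Fintype.ofFinite E
  obtain ⟨T, -, rfl⟩ := hs
  have hrm : Measurable ((Set.Iio t).domRestrict : (ℕ → E) → (Set.Iio t → E)) :=
    measurable_pi_lambda _ (fun i => measurable_pi_apply _)
  have hB : MeasurableSet {ω : ℕ → E | ω t = y} :=
    (measurableSet_singleton y).preimage (measurable_pi_apply t)
  have hT : ((T.toFinite.toFinset : Finset (Set.Iio t → E)) : Set (Set.Iio t → E)) = T := by simp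
  have hms : ∀ z ∈ T.toFinite.toFinset,
      MeasurableSet (((Set.Iio t).domRestrict : (ℕ → E) → (Set.Iio t → E)) ⁻¹' {z}) :=
    fun z _ => hrm (measurableSet_singleton z)
  rw [← Measure.restrict_apply (hrm (Set.toFinite T).measurableSet), ← hT,
    ← sum_measure_preimage_singleton _ hms, ← sum_measure_preimage_singleton _ hms,
    Finset.sum_mul]
  refine Finset.sum_congr rfl (fun z hz => ?_)
  rw [Measure.restrict_apply (hms z hz)]
  let ys : ℕ → E := fun i => if h : i < t then z ⟨i, h⟩ else y
  have h1 : ((Set.Iio t).domRestrict : (ℕ → E) → (Set.Iio t → E)) ⁻¹' {z}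
      = {ω | ∀ i < t, ω i = ys i} := by
    ext ω
    simp only [Set.mem_preimage, Set.mem_singleton_iff, Set.mem_ofPred_eq, funext_iff, ys]
    constructor
    · intro h i hi
      simpa [hi] using h ⟨i, hi⟩
    · rintro h ⟨i, hi⟩
      simpa [Set.mem_Iio.1 hi] using h i hi
  have h2 : {ω : ℕ → E | ∀ i < t, ω i = ys i} ∩ {ω | ω t = y}
      = {ω | ∀ i < t + 1, ω i = ys i} := by
    ext ω
    have : ys t = y := by simp [ys]
    simp only [Set.mem_inter_iff, Set.mem_ofPred_eq, Nat.lt_succ_iff_lt_or_eq, or_imp, forall_and,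
      forall_eq, this]
  rw [h1, h2, hμ, hμ, Finset.prod_range_succ, ENNReal.ofReal_mul (Finset.prod_nonneg fun _ _ => hp _)]
  simp [ys]

/-- Freezing lemma: conditionally on the past, a function of the past and of the new sample `ω t`
is averaged over the law `p` of that sample. -/
lemma condExp_past_eq_sum [Fintype E] [IsProbabilityMeasure μ] (hp : ∀ y, 0 ≤ p y)
    (hμ : ∀ (t : ℕ) (ys : ℕ → E), μ {ω | ∀ i < t, ω i = ys i} =
      ENNReal.ofReal (∏ i ∈ Finset.range t, p (ys i)))
    (t : ℕ) (f : E → (ℕ → E) → ℝ) (hf : ∀ y, DependsOn (f y) (Set.Iio t)) :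
    μ[fun ω => f (ω t) ω | pastFiltration E t] =ᵐ[μ] fun ω => ∑ y, p y * f y ω := by
  classical
  have hB : ∀ y, MeasurableSet {ω : ℕ → E | ω t = y} := fun y =>
    (measurableSet_singleton y).preimage (measurable_pi_apply t)
  have hI : ∀ y, Integrable ({ω : ℕ → E | ω t = y}.indicator (fun _ => (1 : ℝ))) μ := fun y =>
    (integrable_const (1 : ℝ)).indicator (hB y)
  have hind : ∀ y, (fun _ => p y) =ᵐ[μ]
      μ[{ω : ℕ → E | ω t = y}.indicator (fun _ => (1 : ℝ)) | pastFiltration E t] := by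
    intro y
    refine ae_eq_condExp_of_forall_setIntegral_eq ((pastFiltration E).le t) (hI y)
      (fun s _ _ => integrableOn_const (measure_ne_top _ _)) (fun s hs _ => ?_)
      stronglyMeasurable_const.aestronglyMeasurable
    rw [setIntegral_indicator (hB y), setIntegral_const, setIntegral_const, measureReal_def,
      measureReal_def, measure_inter_coord hp hμ t y hs, ENNReal.toReal_mul,
      ENNReal.toReal_ofReal (hp y)]
    simp
  have hfI : ∀ y, Integrable (f y * {ω : ℕ → E | ω t = y}.indicator (fun _ => (1 : ℝ))) μ := by
    intro y
    have : f y * {ω : ℕ → E | ω t = y}.indicator (fun _ => (1 : ℝ))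
        = {ω : ℕ → E | ω t = y}.indicator (f y) := by
      ext ω; by_cases h : ω t = y <;> simp [h]
    rw [this]
    exact ((hf y).integrable_of_finite μ).indicator (hB y)
  have heq : (fun ω : ℕ → E => f (ω t) ω)
      = ∑ y, f y * {ω : ℕ → E | ω t = y}.indicator (fun _ => (1 : ℝ)) := by
    ext ω
    simp [Finset.sum_apply, Set.indicator_apply]
  rw [heq]
  have hpull : ∀ y, μ[f y * {ω : ℕ → E | ω t = y}.indicator (fun _ => (1 : ℝ)) | pastFiltration E t]
      =ᵐ[μ] fun ω => p y * f y ω := by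
    intro y
    refine (condExp_mul_of_stronglyMeasurable_left (hf y).stronglyMeasurable_past (hfI y)
      (hI y)).trans ?_
    filter_upwards [hind y] with ω hω
    simp only [Pi.mul_apply, ← hω, mul_comm]
  refine (condExp_finsetSum (fun y _ => hfI y) _).trans ?_
  filter_upwards [ae_all_iff.2 hpull] with ω hω
  simp [Finset.sum_apply, hω]

end Past

/-! ### The almost sure convergence theorem for nonnegative processes with negative drift -/

section Supermartingale

variable {E : Type*} [Fintype E] [MeasurableSpace E] [MeasurableSingletonClass E]
  {μ : Measure (ℕ → E)} {p : E → ℝ}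

/-- A nonnegative adapted process `V` whose one-step conditional mean is at most
`(1 + C α²) V + C α² - 2 c α V` tends to zero almost surely under Robbins–Monro step sizes.
The function `F t y` expresses `V (t + 1)` in terms of the past and of the new sample `y`. -/
theorem ae_tendsto_zero_of_drift [IsProbabilityMeasure μ] (hp : ∀ y, 0 ≤ p y)
    (hp1 : ∑ y, p y = 1)
    (hμ : ∀ (t : ℕ) (ys : ℕ → E), μ {ω | ∀ i < t, ω i = ys i} =
      ENNReal.ofReal (∏ i ∈ Finset.range t, p (ys i)))
    (α : ℕ → ℝ) (C c : ℝ) (hα : ∀ t, 0 < α t) (hC : 0 ≤ C) (hc : 0 < c)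
    (hαsum : Tendsto (fun n => ∑ k ∈ Finset.range n, α k) atTop atTop)
    (hαsq : Summable (fun t => (α t) ^ 2))
    (V : ℕ → (ℕ → E) → ℝ) (hV : ∀ t ω, 0 ≤ V t ω) (hVd : ∀ t, DependsOn (V t) (Set.Iio t))
    (F : ℕ → E → (ℕ → E) → ℝ) (hFd : ∀ t y, DependsOn (F t y) (Set.Iio t))
    (hVF : ∀ t ω, V (t + 1) ω = F t (ω t) ω)
    (hF : ∀ t ω, ∑ y, p y * F t y ω ≤
      (1 + C * (α t) ^ 2) * V t ω + C * (α t) ^ 2 - 2 * c * α t * V t ω) :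
    ∀ᵐ ω ∂μ, Tendsto (fun t => V t ω) atTop (nhds 0) := by
  set Q : ℕ → ℝ := fun t => ∏ k ∈ Finset.range t, (1 + C * (α k) ^ 2) with hQ
  have hfac : ∀ k, 1 ≤ 1 + C * (α k) ^ 2 := fun k => by
    have : 0 ≤ C * (α k) ^ 2 := by positivity
    linarith
  have hQ1 : ∀ t, 1 ≤ Q t := fun t => by
    induction t with
    | zero => simp [hQ]
    | succ t ih =>
      have : Q (t + 1) = Q t * (1 + C * (α t) ^ 2) := Finset.prod_range_succ _ _
      rw [this]
      exact one_le_mul_of_one_le_of_one_le ih (hfac t)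
  have hQ0 : ∀ t, 0 < Q t := fun t => lt_of_lt_of_le one_pos (hQ1 t)
  have hS : ∀ t, ∑ k ∈ Finset.range t, C * (α k) ^ 2 ≤ ∑' k, C * (α k) ^ 2 := fun t =>
    (hαsq.mul_left C).sum_le_tsum _ (fun k _ => by positivity)
  set B : ℝ := ∑' k, C * (α k) ^ 2 with hB
  have hQM : ∀ t, Q t ≤ Real.exp B := fun t => by
    calc Q t ≤ ∏ k ∈ Finset.range t, Real.exp (C * (α k) ^ 2) :=
          Finset.prod_le_prod (fun k _ => zero_le_one.trans (hfac k)) (fun k _ => by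
            rw [add_comm]; exact Real.add_one_le_exp _)
      _ = Real.exp (∑ k ∈ Finset.range t, C * (α k) ^ 2) := (Real.exp_sum _ _).symm
      _ ≤ Real.exp B := Real.exp_le_exp.2 (hS t)
  -- the discounted and compensated process
  set Z : ℕ → (ℕ → E) → ℝ := fun t ω =>
    V t ω / Q t + ∑ k ∈ Finset.range t, 2 * c * α k * V k ω / Q (k + 1)
      - ∑ k ∈ Finset.range t, C * (α k) ^ 2 / Q (k + 1) with hZ
  have hdrift : ∀ s t, s ≤ t + 1 → DependsOn (fun ω : ℕ → E =>
      ∑ k ∈ Finset.range s, 2 * c * α k * V k ω / Q (k + 1)) (Set.Iio t) := by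
    intro s t hst ω ω' h
    refine Finset.sum_congr rfl fun k hk => ?_
    rw [hVd k fun i hi => h i (by
      have := Finset.mem_range.1 hk; have := Set.mem_Iio.1 hi; exact Set.mem_Iio.2 (by omega))]
  have hZd : ∀ t, DependsOn (Z t) (Set.Iio t) := by
    intro t ω ω' h
    simp only [hZ]
    have h1 := hdrift t t (by omega) h
    simp only at h1
    rw [hVd t h, h1]
  have hZB : ∀ t ω, -B ≤ Z t ω := by
    intro t ω
    have h1 : 0 ≤ V t ω / Q t := div_nonneg (hV t ω) (hQ0 t).le
    have h2 : 0 ≤ ∑ k ∈ Finset.range t, 2 * c * α k * V k ω / Q (k + 1) :=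
      Finset.sum_nonneg fun k _ => by
        have := hV k ω; have := hα k; have := hQ0 (k + 1); positivity
    have h3 : ∑ k ∈ Finset.range t, C * (α k) ^ 2 / Q (k + 1) ≤ B :=
      (Finset.sum_le_sum fun k _ => div_le_self (by positivity) (hQ1 _)).trans (hS t)
    simp only [hZ]
    linarith
  have hZI : ∀ t, Integrable (Z t) μ := fun t => (hZd t).integrable_of_finite μ
  have hsup : Supermartingale Z (pastFiltration E) μ := by
    refine supermartingale_nat (fun t => (hZd t).stronglyMeasurable_past) hZI fun t => ?_
    let G : E → (ℕ → E) → ℝ := fun y ω => F t y ω / Q (t + 1)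
      + ∑ k ∈ Finset.range (t + 1), 2 * c * α k * V k ω / Q (k + 1)
      - ∑ k ∈ Finset.range (t + 1), C * (α k) ^ 2 / Q (k + 1)
    have hG : ∀ y, DependsOn (G y) (Set.Iio t) := by
      intro y ω ω' h
      simp only [G]
      have h1 := hdrift (t + 1) t le_rfl h
      simp only at h1
      rw [hFd t y h, h1]
    have hZG : Z (t + 1) = fun ω => G (ω t) ω := by
      ext ω
      simp only [hZ, G, hVF]
    rw [hZG]
    filter_upwards [condExp_past_eq_sum hp hμ t G hG] with ω hω
    rw [hω]
    have h1 : ∑ y, p y * G y ω = (∑ y, p y * F t y ω) / Q (t + 1)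
        + ∑ k ∈ Finset.range (t + 1), 2 * c * α k * V k ω / Q (k + 1)
        - ∑ k ∈ Finset.range (t + 1), C * (α k) ^ 2 / Q (k + 1) := by
      simp only [G, mul_sub, mul_add, Finset.sum_sub_distrib, Finset.sum_add_distrib,
        ← Finset.sum_mul, hp1, one_mul, Finset.sum_div, mul_div_assoc]
    have h2 : (∑ y, p y * F t y ω) / Q (t + 1) ≤
        V t ω / Q t + C * (α t) ^ 2 / Q (t + 1) - 2 * c * α t * V t ω / Q (t + 1) := by
      have hQs : Q (t + 1) = Q t * (1 + C * (α t) ^ 2) := Finset.prod_range_succ _ _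
      have h4 : V t ω / Q t = (1 + C * (α t) ^ 2) * V t ω / Q (t + 1) := by
        rw [hQs]
        have := (hQ0 t).ne'
        have := (lt_of_lt_of_le one_pos (hfac t)).ne'
        field_simp
      rw [h4, ← add_div, ← sub_div]
      exact div_le_div_of_nonneg_right (hF t ω) (hQ0 _).le
    rw [h1, Finset.sum_range_succ, Finset.sum_range_succ]
    simp only [hZ]
    linarith
  -- `Z ≥ -B` gives `|Z| ≤ Z + 2 B`, and the mean of `Z` is nonincreasing
  have hnorm : ∀ t, eLpNorm ((-Z) t) 1 μ ≤ ((∫ ω, Z 0 ω ∂μ) + 2 * B).toNNReal := by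
    intro t
    rw [eLpNorm_one_eq_lintegral_enorm, ← ofReal_integral_norm_eq_lintegral_enorm (hsup.neg.2.2 t)]
    refine ENNReal.ofReal_le_ofReal ?_
    have h1 : ∫ ω, Z t ω ∂μ ≤ ∫ ω, Z 0 ω ∂μ := by
      simpa using hsup.setIntegral_le (Nat.zero_le t) MeasurableSet.univ
    calc ∫ ω, ‖(-Z) t ω‖ ∂μ ≤ ∫ ω, (Z t ω + 2 * B) ∂μ := by
          refine integral_mono (hsup.neg.2.2 t).norm ((hZI t).add (integrable_const _)) fun ω => ?_
          have h2 := hZB t ω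
          have h3 := hZB 0 ω
          have hB0 : 0 ≤ B := tsum_nonneg fun k => by positivity
          simp only [Pi.neg_apply, norm_neg, Real.norm_eq_abs]
          rw [abs_le]
          constructor <;> linarith
      _ = (∫ ω, Z t ω ∂μ) + 2 * B := by
          rw [integral_add (hZI t) (integrable_const _)]; simp
      _ ≤ _ := by linarith
  filter_upwards [hsup.neg.exists_ae_tendsto_of_bdd hnorm] with ω ⟨z, hz⟩
  refine tendsto_zero_of_almost_supermartingale_path α (fun t => V t ω) Q C c (Real.exp B) (-z)
    hα hC hc hαsum hαsq (fun t => hV t ω) hQ1 hQM ?_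
  simpa using hz.neg

end Supermartingale

/-! ### Negative definiteness of the TD matrix -/

section Chain

variable {S : Type*} [Fintype S] {P : Matrix S S ℝ} {d : S → ℝ}

/-- A stationary distribution of an irreducible chain charges every state: some state has positive
mass, and `d = d Pⁿ` carries mass from it to any other state. -/
lemma stationary_pos [DecidableEq S] (hnonneg : ∀ i j, 0 ≤ P i j) (hirr : ∀ i j, ∃ n : ℕ, 0 < (P ^ n) i j)
    (hdnonneg : ∀ s, 0 ≤ d s) (hdsum : ∑ s, d s = 1) (hdstat : ∀ j, ∑ i, d i * P i j = d j)
    (j : S) : 0 < d j := by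
  have hstat : ∀ n : ℕ, d ᵥ* (P ^ n) = d := by
    intro n
    induction n with
    | zero => simp
    | succ n ih =>
      rw [pow_succ, ← Matrix.vecMul_vecMul, ih]
      exact funext hdstat
  have hPn : ∀ (n : ℕ) i j, 0 ≤ (P ^ n) i j := by
    intro n
    induction n with
    | zero =>
      intro i j
      rw [pow_zero, Matrix.one_apply]
      split_ifs <;> norm_num
    | succ n ih =>
      intro i j
      rw [pow_succ, Matrix.mul_apply]
      exact Finset.sum_nonneg fun k _ => mul_nonneg (ih i k) (hnonneg k j)
  obtain ⟨i, -, hi⟩ : ∃ i ∈ Finset.univ, 0 < d i := by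
    apply Finset.exists_lt_of_sum_lt
    simp [hdsum]
  obtain ⟨n, hn⟩ := hirr i j
  rw [← congrFun (hstat n) j]
  calc 0 < d i * (P ^ n) i j := mul_pos hi hn
    _ ≤ ∑ k, d k * (P ^ n) k j := Finset.single_le_sum
        (f := fun k => d k * (P ^ n) k j) (fun k _ => mul_nonneg (hdnonneg k) (hPn n k j))
        (Finset.mem_univ i)

/-- `P` is nonexpansive in `L²(d)` by stationarity, so the quadratic form of `D(γP - I)` is at
most `-(1 - γ)` times the `L²(d)` norm squared. -/
lemma quadratic_form_le (hnonneg : ∀ i j, 0 ≤ P i j) (hrowsum : ∀ i, ∑ j, P i j = 1)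
    (hdnonneg : ∀ s, 0 ≤ d s) (hdstat : ∀ j, ∑ i, d i * P i j = d j)
    {γ : ℝ} (hγ0 : 0 ≤ γ) (u : S → ℝ) :
    ∑ s, d s * u s * (γ * ∑ s', P s s' * u s' - u s) ≤ -((1 - γ) * ∑ s, d s * u s ^ 2) := by
  have h1 : ∑ s, ∑ s', d s * P s s' * (u s * u s') ≤ ∑ s, d s * u s ^ 2 := by
    have h2 : ∑ s, ∑ s', d s * P s s' * u s ^ 2 = ∑ s, d s * u s ^ 2 := by
      refine Finset.sum_congr rfl fun s _ => ?_
      rw [← Finset.sum_mul, ← Finset.mul_sum, hrowsum, mul_one]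
    have h3 : ∑ s, ∑ s', d s * P s s' * u s' ^ 2 = ∑ s, d s * u s ^ 2 := by
      rw [Finset.sum_comm]
      refine Finset.sum_congr rfl fun s _ => ?_
      rw [← Finset.sum_mul, hdstat]
    have h4 : ∑ s, ∑ s', d s * P s s' * (u s * u s') ≤
        ∑ s, ∑ s', (d s * P s s' * u s ^ 2 + d s * P s s' * u s' ^ 2) / 2 := by
      refine Finset.sum_le_sum fun s _ => Finset.sum_le_sum fun s' _ => ?_
      nlinarith [mul_nonneg (mul_nonneg (hdnonneg s) (hnonneg s s')) (sq_nonneg (u s - u s'))]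
    simp only [← Finset.sum_div, Finset.sum_add_distrib, h2, h3] at h4
    linarith
  have h5 : ∑ s, d s * u s * (γ * ∑ s', P s s' * u s' - u s)
      = γ * (∑ s, ∑ s', d s * P s s' * (u s * u s')) - ∑ s, d s * u s ^ 2 := by
    rw [Finset.mul_sum, ← Finset.sum_sub_distrib]
    refine Finset.sum_congr rfl fun s _ => ?_
    rw [mul_sub, Finset.mul_sum, Finset.mul_sum, Finset.mul_sum]
    congr 1
    · exact Finset.sum_congr rfl fun s' _ => by ring
    · ring
  rw [h5]
  nlinarith [mul_le_mul_of_nonneg_left h1 hγ0]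

variable [DecidableEq S] {K : ℕ} {X : Matrix S (Fin K) ℝ} {γ : ℝ}

/-- The bilinear form `⟨v, b + A u⟩` as a sum over states; it is the mean of the TD update at `u`
tested against `v`. -/
lemma dotProduct_tdMatrix_mulVec (r : S → ℝ) (u v : Fin K → ℝ) :
    v ⬝ᵥ ((Xᵀ * Matrix.diagonal d) *ᵥ r
      + (Xᵀ * Matrix.diagonal d * (γ • P - 1) * X) *ᵥ u)
    = ∑ s, d s * (X *ᵥ v) s * (r s + (γ * ∑ s', P s s' * (X *ᵥ u) s' - (X *ᵥ u) s)) := by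
  have h1 : (Xᵀ * Matrix.diagonal d * (γ • P - 1) * X) *ᵥ u
      = (Xᵀ * Matrix.diagonal d) *ᵥ ((γ • P - 1) *ᵥ (X *ᵥ u)) := by
    rw [Matrix.mulVec_mulVec, Matrix.mulVec_mulVec, Matrix.mul_assoc]
  rw [h1, ← Matrix.mulVec_add, ← Matrix.mulVec_mulVec, Matrix.dotProduct_mulVec,
    Matrix.vecMul_transpose, Matrix.sub_mulVec, Matrix.smul_mulVec, Matrix.one_mulVec]
  simp only [dotProduct, Matrix.mulVec_diagonal]
  refine Finset.sum_congr rfl fun s _ => ?_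
  simp only [Pi.add_apply, Pi.sub_apply, Pi.smul_apply, smul_eq_mul]
  rw [show (P *ᵥ X *ᵥ u) s = ∑ s', P s s' * (X *ᵥ u) s' from rfl]
  ring

/-- The TD matrix is negative definite, uniformly: `⟨v, A v⟩ ≤ -c |v|²` for one constant `c > 0`. -/
lemma exists_tdMatrix_negDef (hnonneg : ∀ i j, 0 ≤ P i j) (hrowsum : ∀ i, ∑ j, P i j = 1)
    (hd : ∀ s, 0 < d s) (hdstat : ∀ j, ∑ i, d i * P i j = d j)
    (hγ0 : 0 ≤ γ) (hγ1 : γ < 1) (hX : Function.Injective X.mulVec) :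
    ∃ c : ℝ, 0 < c ∧ ∀ v : Fin K → ℝ,
      v ⬝ᵥ ((Xᵀ * Matrix.diagonal d * (γ • P - 1) * X) *ᵥ v) ≤ -(c * ∑ k, v k ^ 2) := by
  classical
  obtain ⟨g, hg⟩ := LinearMap.exists_leftInverse_of_injective X.mulVecLin
    (LinearMap.ker_eq_bot.2 hX)
  set L := LinearMap.toMatrix' g with hL
  have hLX : ∀ v, L *ᵥ (X *ᵥ v) = v := fun v => by
    rw [hL, LinearMap.toMatrix'_mulVec]
    exact LinearMap.congr_fun hg v
  obtain ⟨m, hm, hmd⟩ : ∃ m : ℝ, 0 < m ∧ ∀ s, m ≤ d s := by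
    rcases isEmpty_or_nonempty S with h | h
    · exact ⟨1, one_pos, fun s => h.elim s⟩
    · obtain ⟨s₀, hs₀⟩ := Finite.exists_min d
      exact ⟨d s₀, hd s₀, hs₀⟩
  -- the squared Frobenius norm of a left inverse of `X`, shifted to be positive
  set N : ℝ := (∑ k, ∑ s, L k s ^ 2) + 1 with hN
  have hN0 : 0 < N := by
    have : 0 ≤ ∑ k, ∑ s, L k s ^ 2 :=
      Finset.sum_nonneg fun k _ => Finset.sum_nonneg fun s _ => sq_nonneg _
    linarith
  refine ⟨(1 - γ) * m / N, div_pos (mul_pos (by linarith) hm) hN0, fun v => ?_⟩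
  have h1 := dotProduct_tdMatrix_mulVec (P := P) (d := d) (X := X) (γ := γ) 0 v v
  simp only [Matrix.mulVec_zero, zero_add, Pi.zero_apply] at h1
  rw [h1]
  refine (quadratic_form_le hnonneg hrowsum (fun s => (hd s).le) hdstat hγ0 _).trans ?_
  have h2 : ∑ k, v k ^ 2 ≤ N * ∑ s, (X *ᵥ v) s ^ 2 := by
    have h3 : ∑ k, v k ^ 2 ≤ ∑ k, (∑ s, L k s ^ 2) * ∑ s, (X *ᵥ v) s ^ 2 := by
      refine Finset.sum_le_sum fun k _ => ?_
      conv_lhs => rw [← congrFun (hLX v) k]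
      exact Finset.sum_mul_sq_le_sq_mul_sq _ _ _
    rw [← Finset.sum_mul] at h3
    have h4 : 0 ≤ ∑ s, (X *ᵥ v) s ^ 2 := Finset.sum_nonneg fun s _ => sq_nonneg _
    rw [hN, add_mul]
    linarith
  have h5 : m * ∑ s, (X *ᵥ v) s ^ 2 ≤ ∑ s, d s * (X *ᵥ v) s ^ 2 := by
    rw [Finset.mul_sum]
    exact Finset.sum_le_sum fun s _ => mul_le_mul_of_nonneg_right (hmd s) (sq_nonneg _)
  apply neg_le_neg
  calc (1 - γ) * m / N * ∑ k, v k ^ 2 ≤ (1 - γ) * m / N * (N * ∑ s, (X *ᵥ v) s ^ 2) :=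
        mul_le_mul_of_nonneg_left h2
          (div_pos (mul_pos (by linarith) hm) hN0).le
    _ = (1 - γ) * (m * ∑ s, (X *ᵥ v) s ^ 2) := by field_simp
    _ ≤ _ := mul_le_mul_of_nonneg_left h5 (by linarith)

end Chain

/-! ### Convergence of linear TD -/

/-- Almost sure convergence of linear TD with i.i.d. samples: at each step an
independent pair `(S_{t,0}, S_{t,1})` is drawn with `S_{t,0} ~ d_π` and
`S_{t,1} ~ P_π(S_{t,0}, ·)`; the probability space is the i.i.d. product measure,
characterized here by its cylinder probabilities. Under Robbins–Monro step sizes,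
the iterates converge almost surely to the TD fixed point `w* = −A⁻¹ b`. -/
theorem ae_tendsto_of_linearTD_iid
    {S : Type*} [Fintype S] [Nonempty S] [DecidableEq S]
    [MeasurableSpace S] [MeasurableSingletonClass S] {K : ℕ}
    -- the transition matrix: row stochastic, irreducible, aperiodic
    (P : Matrix S S ℝ)
    (hnonneg : ∀ i j, 0 ≤ P i j)
    (hrowsum : ∀ i, ∑ j, P i j = 1)
    (hirr : ∀ i j, ∃ n : ℕ, 0 < (P ^ n) i j)
    (haper : ∀ i, ∀ e : ℕ, (∀ n ∈ returnTimes P i, e ∣ n) → e = 1)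
    -- the stationary distribution
    (d : S → ℝ) (hdnonneg : ∀ s, 0 ≤ d s) (hdsum : ∑ s, d s = 1)
    (hdstat : ∀ j, ∑ i, d i * P i j = d j)
    -- features with full column rank, rewards, discount
    (feat : S → Fin K → ℝ)
    (X : Matrix S (Fin K) ℝ) (hXfeat : X = Matrix.of feat)
    (hX : Function.Injective X.mulVec)
    (r : S → ℝ)
    (γ : ℝ) (hγ0 : 0 ≤ γ) (hγ1 : γ < 1)
    -- Robbins–Monro step sizes
    (α : ℕ → ℝ) (hαpos : ∀ t, 0 < α t)
    (hαsum : Tendsto (fun n => ∑ k ∈ Finset.range n, α k) atTop atTop)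
    (hαsqsum : Summable (fun t => (α t) ^ 2))
    -- the i.i.d. product measure over pairs, characterized by cylinder probabilities
    (μ : Measure (ℕ → S × S)) [IsProbabilityMeasure μ]
    (hμ : ∀ (n : ℕ) (ys : ℕ → S × S),
      μ {ω | ∀ i ≤ n, ω i = ys i} =
        ENNReal.ofReal (∏ i ∈ Finset.range (n + 1), d (ys i).1 * P (ys i).1 (ys i).2))
    -- the linear TD iterates driven by the i.i.d. samples
    (w₀ : Fin K → ℝ) (w : ℕ → (ℕ → S × S) → (Fin K → ℝ))
    (hw0 : ∀ ω, w 0 ω = w₀)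
    (hwstep : ∀ t ω, w (t + 1) ω = w t ω +
      (α t * (r (ω t).1 + γ * (∑ k, feat (ω t).2 k * w t ω k)
        - ∑ k, feat (ω t).1 k * w t ω k)) • feat (ω t).1)
    -- the TD fixed point
    (A : Matrix (Fin K) (Fin K) ℝ)
    (hA : A = Xᵀ * Matrix.diagonal d * (γ • P - 1) * X)
    (b : Fin K → ℝ) (hb : b = (Xᵀ * Matrix.diagonal d).mulVec r)
    (wstar : Fin K → ℝ) (hwstar : wstar = -(A⁻¹.mulVec b)) :
    ∀ᵐ ω ∂μ, Tendsto (fun t => w t ω) atTop (nhds wstar) := by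
  have hd := stationary_pos hnonneg hirr hdnonneg hdsum hdstat
  obtain ⟨c, hc, hneg⟩ := exists_tdMatrix_negDef hnonneg hrowsum hd hdstat hγ0 hγ1 hX
  rw [← hA] at hneg
  -- negative definiteness makes `A` invertible, so `wstar` solves `A w = -b`
  have hfix : b + A *ᵥ wstar = 0 := by
    have hinj : Function.Injective A.mulVec := by
      intro u v huv
      have h0 : A *ᵥ (u - v) = 0 := by rw [Matrix.mulVec_sub]; exact sub_eq_zero.2 huv
      have h1 := hneg (u - v)
      rw [h0, dotProduct_zero] at h1
      have h2 : ∑ k, (u - v) k ^ 2 = 0 := by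
        have h3 : 0 ≤ ∑ k, (u - v) k ^ 2 := Finset.sum_nonneg fun k _ => sq_nonneg _
        nlinarith
      ext k
      have h4 := (Finset.sum_eq_zero_iff_of_nonneg fun k _ => sq_nonneg _).1 h2 k (Finset.mem_univ k)
      exact sub_eq_zero.1 (pow_eq_zero_iff two_ne_zero |>.1 h4)
    have hu : IsUnit A.det := (Matrix.isUnit_iff_isUnit_det A).1
      (Matrix.mulVec_injective_iff_isUnit.1 hinj)
    rw [hwstar, Matrix.mulVec_neg, Matrix.mulVec_mulVec, Matrix.mul_nonsing_inv A hu,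
      Matrix.one_mulVec, add_neg_cancel]
  set p : S × S → ℝ := fun y => d y.1 * P y.1 y.2 with hp
  have hp0 : ∀ y, 0 ≤ p y := fun y => mul_nonneg (hdnonneg _) (hnonneg _ _)
  have hp1 : ∑ y, p y = 1 := by
    simp only [hp, Fintype.sum_prod_type, ← Finset.mul_sum, hrowsum, mul_one, hdsum]
  have hμ' : ∀ (t : ℕ) (ys : ℕ → S × S), μ {ω | ∀ i < t, ω i = ys i} =
      ENNReal.ofReal (∏ i ∈ Finset.range t, p (ys i)) := by
    intro t ys
    cases t with
    | zero => simp
    | succ n => simpa only [Nat.lt_succ_iff] using hμ n ys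
  -- the temporal difference at parameter `u`
  set δ : S × S → (Fin K → ℝ) → ℝ := fun y u =>
    r y.1 + γ * (∑ k, feat y.2 k * u k) - ∑ k, feat y.1 k * u k with hδ
  have hmean : ∀ u : Fin K → ℝ,
      ∑ y, p y * (δ y u * ∑ k, (u k - wstar k) * feat y.1 k)
        ≤ -(c * ∑ k, (u k - wstar k) ^ 2) := by
    intro u
    have h1 := dotProduct_tdMatrix_mulVec (P := P) (d := d) (X := X) (γ := γ) r u (u - wstar)
    rw [← hA, ← hb] at h1
    have h2 : b + A *ᵥ u = A *ᵥ (u - wstar) := by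
      rw [Matrix.mulVec_sub, eq_neg_of_add_eq_zero_left hfix]
      abel
    rw [h2] at h1
    have h3 := hneg (u - wstar)
    rw [h1] at h3
    refine le_trans (le_of_eq ?_) h3
    rw [Fintype.sum_prod_type]
    refine Finset.sum_congr rfl fun s _ => ?_
    have hXu : ∀ (s : S) (u : Fin K → ℝ), (X *ᵥ u) s = ∑ k, feat s k * u k := by
      intro s u; rw [hXfeat]; rfl
    simp only [hXu, hp, hδ, Pi.sub_apply]
    have h5 : ∑ k, (u k - wstar k) * feat s k = ∑ k, feat s k * (u k - wstar k) :=
      Finset.sum_congr rfl fun k _ => mul_comm _ _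
    rw [h5]
    generalize ∑ k, feat s k * (u k - wstar k) = a
    generalize ∑ k, feat s k * u k = e
    calc ∑ s', d s * P s s' * ((r s + γ * (∑ k, feat s' k * u k) - e) * a)
        = ∑ s', (d s * a * (r s - e) * P s s'
            + d s * a * γ * (P s s' * ∑ k, feat s' k * u k)) :=
          Finset.sum_congr rfl fun s' _ => by ring
      _ = d s * a * (r s + (γ * (∑ s', P s s' * ∑ k, feat s' k * u k) - e)) := by
          rw [Finset.sum_add_distrib, ← Finset.mul_sum, ← Finset.mul_sum, hrowsum]
          ring
  -- a common constant for the quadratic growth of the squared update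
  set C : ℝ := ∑ y : S × S, (2 * δ y wstar ^ 2 + 2 * ∑ k, (γ * feat y.2 k - feat y.1 k) ^ 2)
    * ∑ k, feat y.1 k ^ 2 with hCdef
  have hCterm : ∀ y : S × S, 0 ≤
      (2 * δ y wstar ^ 2 + 2 * ∑ k, (γ * feat y.2 k - feat y.1 k) ^ 2) * ∑ k, feat y.1 k ^ 2 :=
    fun y => by positivity
  have hC : 0 ≤ C := Finset.sum_nonneg fun y _ => hCterm y
  have hgrow : ∀ (y : S × S) (u : Fin K → ℝ),
      δ y u ^ 2 * ∑ k, feat y.1 k ^ 2 ≤ C * (1 + ∑ k, (u k - wstar k) ^ 2) := by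
    intro y u
    have h1 : δ y u = δ y wstar
        + ∑ k, (γ * feat y.2 k - feat y.1 k) * (u k - wstar k) := by
      have h2 : ∑ k, (γ * feat y.2 k - feat y.1 k) * (u k - wstar k)
          = γ * (∑ k, feat y.2 k * u k) - (∑ k, feat y.1 k * u k)
            - (γ * (∑ k, feat y.2 k * wstar k) - ∑ k, feat y.1 k * wstar k) := by
        simp only [Finset.mul_sum, ← Finset.sum_sub_distrib]
        exact Finset.sum_congr rfl fun k _ => by ring
      rw [h2]
      simp only [hδ]
      ring
    have hcs := Finset.sum_mul_sq_le_sq_mul_sq Finset.univ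
      (fun k => γ * feat y.2 k - feat y.1 k) (fun k => u k - wstar k)
    set V := ∑ k, (u k - wstar k) ^ 2 with hV
    have hV0 : 0 ≤ V := Finset.sum_nonneg fun k _ => sq_nonneg _
    set q := ∑ k, (γ * feat y.2 k - feat y.1 k) ^ 2 with hq
    have hq0 : 0 ≤ q := Finset.sum_nonneg fun k _ => sq_nonneg _
    have h3 : δ y u ^ 2 ≤ (2 * δ y wstar ^ 2 + 2 * q) * (1 + V) := by
      rw [h1]
      generalize ∑ k, (γ * feat y.2 k - feat y.1 k) * (u k - wstar k) = e at hcs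
      nlinarith [sq_nonneg (δ y wstar - e), mul_nonneg (sq_nonneg (δ y wstar)) hV0]
    have h4 : 0 ≤ ∑ k, feat y.1 k ^ 2 := Finset.sum_nonneg fun k _ => sq_nonneg _
    calc δ y u ^ 2 * ∑ k, feat y.1 k ^ 2
        ≤ (2 * δ y wstar ^ 2 + 2 * q) * (1 + V) * ∑ k, feat y.1 k ^ 2 :=
          mul_le_mul_of_nonneg_right h3 h4
      _ = ((2 * δ y wstar ^ 2 + 2 * q) * ∑ k, feat y.1 k ^ 2) * (1 + V) := by ring
      _ ≤ C * (1 + V) := mul_le_mul_of_nonneg_right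
          (Finset.single_le_sum (fun y _ => hCterm y) (Finset.mem_univ y)) (by linarith)
  have hwd : ∀ t, DependsOn (w t) (Set.Iio t) := by
    intro t
    induction t with
    | zero => intro ω ω' _; rw [hw0, hw0]
    | succ t ih =>
      intro ω ω' h
      rw [hwstep, hwstep, ih fun i hi => h i (Set.mem_Iio.2 (Nat.lt_succ_of_lt hi)),
        h t (Set.mem_Iio.2 t.lt_succ_self)]
  have hconv := ae_tendsto_zero_of_drift hp0 hp1 hμ' α C c hαpos hC hc hαsum hαsqsum
    (fun t ω => ∑ k, (w t ω k - wstar k) ^ 2)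
    (fun t ω => Finset.sum_nonneg fun k _ => sq_nonneg _)
    (fun t ω ω' h => by simp only [hwd t h])
    (fun t y ω => ∑ k, (w t ω k + α t * δ y (w t ω) * feat y.1 k - wstar k) ^ 2)
    (fun t y ω ω' h => by simp only [hwd t h])
    (fun t ω => by
      refine Finset.sum_congr rfl fun k _ => ?_
      rw [hwstep]
      simp only [Pi.add_apply, Pi.smul_apply, smul_eq_mul, hδ])
    (fun t ω => by
      set u := w t ω
      have hexp : ∀ y : S × S, ∑ k, (u k + α t * δ y u * feat y.1 k - wstar k) ^ 2
          = ∑ k, (u k - wstar k) ^ 2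
            + 2 * α t * (δ y u * ∑ k, (u k - wstar k) * feat y.1 k)
            + α t ^ 2 * (δ y u ^ 2 * ∑ k, feat y.1 k ^ 2) := by
        intro y
        simp only [Finset.mul_sum, ← Finset.sum_add_distrib]
        exact Finset.sum_congr rfl fun k _ => by ring
      set V := ∑ k, (u k - wstar k) ^ 2 with hV
      calc ∑ y, p y * ∑ k, (u k + α t * δ y u * feat y.1 k - wstar k) ^ 2
          ≤ ∑ y, (p y * V + 2 * α t * (p y * (δ y u * ∑ k, (u k - wstar k) * feat y.1 k))
              + p y * (α t ^ 2 * (C * (1 + V)))) := by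
            refine Finset.sum_le_sum fun y _ => ?_
            rw [hexp y]
            have h1 := mul_le_mul_of_nonneg_left
              (mul_le_mul_of_nonneg_left (hgrow y u) (sq_nonneg (α t))) (hp0 y)
            linarith
        _ = V + 2 * α t * (∑ y, p y * (δ y u * ∑ k, (u k - wstar k) * feat y.1 k))
              + α t ^ 2 * (C * (1 + V)) := by
            rw [Finset.sum_add_distrib, Finset.sum_add_distrib, ← Finset.sum_mul,
              ← Finset.sum_mul, ← Finset.mul_sum, hp1, one_mul, one_mul]
        _ ≤ _ := by
            have h1 := mul_le_mul_of_nonneg_left (hmean u) (mul_pos two_pos (hαpos t)).le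
            linarith)
  filter_upwards [hconv] with ω hω
  rw [tendsto_pi_nhds]
  intro k
  have h1 : Tendsto (fun t => (w t ω k - wstar k) ^ 2) atTop (nhds 0) :=
    squeeze_zero (fun t => sq_nonneg _) (fun t => Finset.single_le_sum
      (f := fun k => (w t ω k - wstar k) ^ 2) (fun k _ => sq_nonneg _) (Finset.mem_univ k)) hω
  have h2 : Tendsto (fun t => |w t ω k - wstar k|) atTop (nhds 0) := by
    simpa [Real.sqrt_sq_eq_abs] using h1.sqrt
  exact tendsto_sub_nhds_zero_iff.1 ((tendsto_zero_iff_abs_tendsto_zero _).2 h2)
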